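/- Let X be a geometric tree and T a generic cellular merge tree with n leaves. Then the space Conf_Min(X,T) of configurations of disjoint connected closed subsets (X₁,…,Xₙ) of X satisfying the convex-hull compatibility condition deformation retracts onto the subspace Conf(X,T) of point configurations; in particular they are homotopy equivalent. -/

import Mathlib

open scoped Classical

noncomputable section

instance dartTop {V : Type*} (G : SimpleGraph V) : TopologicalSpace G.Dart := ⊥

/-- Gluing relation for the geometric realization of a graph: one copy of `[0,1]` per
oriented edge, opposite orientations identified by `t ↦ 1-t`, and starting points of edges
with the same initial vertex identified. -/
def treeRel {V : Type*} (G : SimpleGraph V) :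
    (G.Dart × ↥(Set.Icc (0:ℝ) 1)) → (G.Dart × ↥(Set.Icc (0:ℝ) 1)) → Prop :=
  fun p q =>
    (p.1 = q.1.symm ∧ (p.2 : ℝ) = 1 - (q.2 : ℝ)) ∨
    (p.1.toProd.1 = q.1.toProd.1 ∧ (p.2 : ℝ) = 0 ∧ (q.2 : ℝ) = 0)

/-- The geometric realization of a graph. -/
def TreeSpace {V : Type*} (G : SimpleGraph V) := Quot (treeRel G)

instance {V : Type*} (G : SimpleGraph V) : TopologicalSpace (TreeSpace G) :=
  instTopologicalSpaceQuot
/-- Combinatorial data for a cellular merge tree: a finite rooted tree with a real value at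
each node, strictly increasing towards the root; the root carries an infinite upward ray. -/
structure MergeTreeData where
  n : ℕ
  parent : Fin n → Fin n
  root : Fin n
  hroot : parent root = root
  hreach : ∀ v, ∃ k, parent^[k] v = root
  val : Fin n → ℝ
  hval : ∀ v, v ≠ root → val v < val (parent v)

namespace MergeTreeData

variable (d : MergeTreeData)

/-- Points of the edge attached below each node (for the root: the infinite upward ray). -/
def Carrier : Set (Fin d.n × ℝ) :=
  {p | d.val p.1 ≤ p.2 ∧ (p.1 ≠ d.root → p.2 ≤ d.val (d.parent p.1))}

/-- Glue the top of each edge to the bottom of the parent's edge. -/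
def glueRel : ↥d.Carrier → ↥d.Carrier → Prop := fun a b =>
  a.1.2 = b.1.2 ∧ d.parent a.1.1 = b.1.1 ∧ a.1.2 = d.val (d.parent a.1.1)

/-- The geometric realization of the cellular merge tree `d`. -/
def Space := Quot d.glueRel

instance : TopologicalSpace d.Space := instTopologicalSpaceQuot

/-- The gauge of the canonical cellular merge tree. -/
def gauge : d.Space → ℝ := Quot.lift (fun a => a.1.2) (fun _ _ h => h.1)

/-- `v` is a descendant of `w` (possibly `v = w`). -/
def Desc (v w : Fin d.n) : Prop := ∃ k, d.parent^[k] v = w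

def IsLeafNode (v : Fin d.n) : Prop := ∀ w, d.parent w = v → w = v

def IsBranchNode (v : Fin d.n) : Prop := 2 ≤ Nat.card {w : Fin d.n // d.parent w = v ∧ w ≠ v}

/-- Generic: binary (each node has zero or two children) and leaves take distinct values. -/
def Generic : Prop :=
  (∀ v, Nat.card {w : Fin d.n // d.parent w = v ∧ w ≠ v} = 0 ∨
        Nat.card {w : Fin d.n // d.parent w = v ∧ w ≠ v} = 2) ∧
  ∀ v w, d.IsLeafNode v → d.IsLeafNode w → v ≠ w → d.val v ≠ d.val w

/-- `a` is the least common ancestor of `u` and `w`. -/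
def IsLCA (u w a : Fin d.n) : Prop :=
  d.Desc u a ∧ d.Desc w a ∧ ∀ b, d.Desc u b → d.Desc w b → d.Desc a b

/-- The type of leaves. -/
def Leaf := {v : Fin d.n // d.IsLeafNode v}

end MergeTreeData

/-- Isomorphism of gauged spaces: a homeomorphism commuting with the gauges. -/
def GaugedIso {A B : Type*} [TopologicalSpace A] [TopologicalSpace B]
    (πA : A → ℝ) (πB : B → ℝ) : Prop :=
  ∃ e : A ≃ₜ B, ∀ x, πB (e x) = πA x

/-- A gauged space is a cellular merge tree if it is isomorphic (as a gauged space) to the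
realization of some combinatorial merge tree data. -/
def IsCellularMergeTree {A : Type*} [TopologicalSpace A] (π : A → ℝ) : Prop :=
  ∃ d : MergeTreeData, GaugedIso d.gauge π
/-- The convex hull of a subset of a tree: the intersection of all closed connected
(preconnected) supersets. -/
def ConvH {X : Type*} [TopologicalSpace X] (A : Set X) : Set X :=
  ⋂₀ {C : Set X | A ⊆ C ∧ IsClosed C ∧ IsPreconnected C}

/-- The hull `Conv(v)` associated to a node `v`: convex hull of the union of the sets
indexed by the leaves descendant from `v`. -/
def hullOf {X : Type*} [TopologicalSpace X] (d : MergeTreeData)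
    (F : d.Leaf → Set X) (v : Fin d.n) : Set X :=
  ConvH (⋃ l : d.Leaf, if d.Desc l.1 v then F l else ∅)

/-- The hull-compatibility constraint defining the constrained configuration spaces: hulls
of incomparable nodes are disjoint. -/
def HullCond {X : Type*} [TopologicalSpace X] (d : MergeTreeData) (F : d.Leaf → Set X) : Prop :=
  ∀ v w : Fin d.n, (hullOf d F v ∩ hullOf d F w).Nonempty → d.Desc v w ∨ d.Desc w v

/-- Membership in the constrained point configuration space `Conf(X,T)`. -/
def ConfCond {X : Type*} [TopologicalSpace X] (d : MergeTreeData) (x : d.Leaf → X) : Prop :=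
  Function.Injective x ∧ HullCond d (fun l => ({x l} : Set X))

open TopologicalSpace in
/-- Membership in `Conf_Min(X,T)`: a tuple of disjoint nonempty closed connected subsets
(encoded as nonempty compact subsets of the compact metric tree) satisfying the hull
condition. -/
def MinCond {X : Type*} [MetricSpace X] (d : MergeTreeData)
    (F : d.Leaf → NonemptyCompacts X) : Prop :=
  (∀ l, IsConnected (F l : Set X)) ∧
  (Pairwise fun l l' => Disjoint ((F l : Set X)) ((F l' : Set X))) ∧
  HullCond d (fun l => (F l : Set X))


/-- A continuous flow towards the root of a tree, with a height function. -/
def HasFlow (X : Type) [TopologicalSpace X] : Prop :=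
  ∃ (ht : X → ℝ) (g : ℝ → X → X), Continuous ht ∧ Continuous (Function.uncurry g) ∧
    (∀ x, 0 ≤ ht x) ∧ (∀ s, {x | ht x = s}.Finite) ∧
    (∀ s x, 0 ≤ s → ht (g s x) = min s (ht x)) ∧ (∀ s x, ht x ≤ s → g s x = x)

theorem HasFlow.congr {X Y : Type} [TopologicalSpace X] [TopologicalSpace Y] (e : X ≃ₜ Y)
    (h : HasFlow Y) : HasFlow X := by
  obtain ⟨ht, g, h1, h2, h3, h4, h5, h6⟩ := h
  refine ⟨fun x => ht (e x), fun s x => e.symm (g s (e x)), h1.comp e.continuous, ?_,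
    fun x => h3 _, ?_, ?_, ?_⟩
  · have : Continuous fun p : ℝ × X => e.symm (Function.uncurry g (p.1, e p.2)) := by fun_prop
    exact this
  · intro s
    exact (h4 s).preimage e.injective.injOn
  · intro s x hs
    simp [h5 s _ hs]
  · intro s x hs
    simp [h6 s _ hs]

section flow

variable {X : Type} [TopologicalSpace X] {ht : X → ℝ} {g : ℝ → X → X}

/-- The flow at level `s` is locally constant above level `s`. -/
theorem flow_const [T1Space X] (h2 : Continuous (Function.uncurry g))
    (h4 : ∀ s, {x | ht x = s}.Finite)
    (h5 : ∀ s x, 0 ≤ s → ht (g s x) = min s (ht x)) {A : Set X}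
    (hA : IsPreconnected A) {s : ℝ} (hs : 0 ≤ s) (hle : ∀ x ∈ A, s ≤ ht x) {x y : X}
    (hx : x ∈ A) (hy : y ∈ A) : g s x = g s y := by
  have hc : Continuous (g s) := h2.comp (by fun_prop : Continuous fun x : X => (s, x))
  have hp : IsPreconnected (g s '' A) := hA.image _ hc.continuousOn
  have hsub : g s '' A ⊆ {x | ht x = s} := by
    rintro _ ⟨z, hz, rfl⟩
    simp [h5 s z hs, hle z hz]
  have hf : (g s '' A).Finite := (h4 s).subset hsub
  have hsing : (g s '' A).Subsingleton := by
    by_contra hn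
    exact hp.infinite_of_nontrivial (Set.not_subsingleton_iff.1 hn) hf
  exact hsing (Set.mem_image_of_mem _ hx) (Set.mem_image_of_mem _ hy)

theorem flow_mem [T1Space X] (h1 : Continuous ht) (h2 : Continuous (Function.uncurry g))
    (h4 : ∀ s, {x | ht x = s}.Finite)
    (h5 : ∀ s x, 0 ≤ s → ht (g s x) = min s (ht x)) (h6 : ∀ s x, ht x ≤ s → g s x = x)
    {A : Set X} (hA : IsPreconnected A) {s : ℝ} (hs : 0 ≤ s) {c : X} (hc : c ∈ A)
    (hcs : ht c ≤ s) {x : X} (hx : x ∈ A) : g s x ∈ A := by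
  by_cases hxs : ht x ≤ s
  · rwa [h6 s x hxs]
  push Not at hxs
  by_contra hp
  have hgc : Continuous (g s) := h2.comp (by fun_prop : Continuous fun x : X => (s, x))
  have hpt : ht (g s x) = s := by rw [h5 s x hs]; exact min_eq_left hxs.le
  have hV : IsOpen {y | g s y ≠ g s x} := isOpen_ne.preimage hgc
  have hU : IsOpen {y | s < ht y ∧ g s y = g s x} := by
    have hF : IsClosed ({z | ht z = s} \ {g s x}) := ((h4 s).subset Set.sdiff_subset).isClosed
    have : {y | s < ht y ∧ g s y = g s x} =
        {y | s < ht y} ∩ (g s) ⁻¹' ({z | ht z = s} \ {g s x})ᶜ := by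
      ext y
      simp only [Set.mem_ofPred_eq, Set.mem_inter_iff, Set.mem_preimage, Set.mem_compl_iff,
        Set.mem_sdiff, Set.mem_singleton_iff, not_and, not_not]
      constructor
      · rintro ⟨a, b⟩
        exact ⟨a, fun _ => b⟩
      · rintro ⟨a, b⟩
        exact ⟨a, b (by rw [h5 s y hs]; exact min_eq_left a.le)⟩
    rw [this]
    exact (isOpen_lt continuous_const h1).inter (hF.isOpen_compl.preimage hgc)
  obtain ⟨z, -, hz1, hz2⟩ := hA _ _ hU hV (by
      intro y hy
      by_cases hgy : g s y = g s x
      · left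
        refine ⟨?_, hgy⟩
        by_contra hlt
        push Not at hlt
        rw [h6 s y hlt] at hgy
        exact hp (hgy ▸ hy)
      · right
        exact hgy) ⟨x, hx, hxs, rfl⟩ ⟨c, hc, by
          change g s c ≠ g s x
          rw [h6 s c hcs]
          rintro rfl
          exact hp hc⟩
  exact hz2 hz1.2

end flow

open TopologicalSpace in
theorem continuous_minHeight {X : Type} [TopologicalSpace X] {ht : X → ℝ} (h1 : Continuous ht) :
    Continuous fun A : NonemptyCompacts X => sInf (ht '' (A : Set X)) := by
  have key : ∀ A : NonemptyCompacts X, ∃ c ∈ (A : Set X), sInf (ht '' (A : Set X)) = ht c ∧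
      ∀ y ∈ (A : Set X), ht c ≤ ht y := by
    intro A
    exact A.isCompact.exists_sInf_image_eq_and_le A.nonempty h1.continuousOn
  refine continuous_iff_lower_upperSemicontinuous.2 ⟨?_, ?_⟩
  · refine lowerSemicontinuous_iff_isOpen_preimage.2 fun b => ?_
    convert NonemptyCompacts.isOpen_subsets_of_isOpen (isOpen_lt continuous_const h1 :
      IsOpen {x | b < ht x}) using 1
    ext A
    obtain ⟨c, hc, he, hm⟩ := key A
    simp only [Set.mem_preimage, Set.mem_Ioi, Set.mem_ofPred_eq, he]
    exact ⟨fun h y hy => h.trans_le (hm y hy), fun h => h hc⟩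
  · refine upperSemicontinuous_iff_isOpen_preimage.2 fun b => ?_
    convert NonemptyCompacts.isOpen_inter_nonempty_of_isOpen (isOpen_lt h1 continuous_const :
      IsOpen {x | ht x < b}) using 1
    ext A
    obtain ⟨c, hc, he, hm⟩ := key A
    simp only [Set.mem_preimage, Set.mem_Iio, Set.mem_ofPred_eq, he]
    exact ⟨fun h => ⟨c, hc, h⟩, fun ⟨y, hy, h⟩ => (hm y hy).trans_lt h⟩

theorem ConvH_mono {X : Type*} [TopologicalSpace X] {A B : Set X} (h : A ⊆ B) :
    ConvH A ⊆ ConvH B :=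
  Set.sInter_subset_sInter fun _ hC => ⟨h.trans hC.1, hC.2⟩

theorem hullOf_mono {X : Type*} [TopologicalSpace X] (d : MergeTreeData)
    {F F' : d.Leaf → Set X} (h : ∀ l, F' l ⊆ F l) (v : Fin d.n) :
    hullOf d F' v ⊆ hullOf d F v := by
  refine ConvH_mono (Set.iUnion_mono fun l => ?_)
  split_ifs
  · exact h l
  · exact subset_rfl

open TopologicalSpace in
theorem MinCond.mono {X : Type*} [MetricSpace X] {d : MergeTreeData}
    {F F' : d.Leaf → NonemptyCompacts X} (hF : MinCond d F)
    (h : ∀ l, (F' l : Set X) ⊆ F l) (hc : ∀ l, IsConnected (F' l : Set X)) : MinCond d F' := by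
  refine ⟨hc, fun l l' hl => (hF.2.1 hl).mono (h l) (h l'), fun v w hvw => hF.2.2 v w ?_⟩
  exact hvw.mono (Set.inter_subset_inter (hullOf_mono d h v) (hullOf_mono d h w))

open TopologicalSpace in
theorem main_of_flow {X : Type} [MetricSpace X] [CompactSpace X] (hX : HasFlow X)
    (d : MergeTreeData) :
    ∃ H : C(↥unitInterval × {F : d.Leaf → NonemptyCompacts X // MinCond d F},
            {F : d.Leaf → NonemptyCompacts X // MinCond d F}),
      (∀ a, H (0, a) = a) ∧
      (∀ a l, ∃ x : X, ((H (1, a)).1 l : Set X) = {x}) ∧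
      (∀ a, (∀ l, ∃ x : X, ((a.1 l : Set X)) = {x}) → ∀ u, H (u, a) = a) := by
  obtain ⟨ht, g, h1, h2, h3, h4, h5, h6⟩ := hX
  obtain ⟨B, hB⟩ : ∃ B, ∀ x, ht x ≤ B := by
    obtain ⟨B, hB⟩ := (isCompact_range h1).bddAbove
    exact ⟨B, fun x => hB ⟨x, rfl⟩⟩
  let m : NonemptyCompacts X → ℝ := fun A => sInf (ht '' (A : Set X))
  have hmc : Continuous m := continuous_minHeight h1
  have key : ∀ A : NonemptyCompacts X, ∃ c ∈ (A : Set X), m A = ht c ∧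
      ∀ y ∈ (A : Set X), ht c ≤ ht y := by
    intro A
    exact A.isCompact.exists_sInf_image_eq_and_le A.nonempty h1.continuousOn
  have hm0 : ∀ A, 0 ≤ m A := by
    intro A
    obtain ⟨c, -, h, -⟩ := key A
    rw [h]
    exact h3 c
  have hgc : ∀ s, Continuous (g s) := fun s =>
    h2.comp (by fun_prop : Continuous fun x : X => (s, x))
  let lev : ↥unitInterval × NonemptyCompacts X → ℝ := fun p => max (m p.2) ((1 - (p.1 : ℝ)) * B)
  have hlev : Continuous lev := by fun_prop
  let K : ↥unitInterval × NonemptyCompacts X → NonemptyCompacts X := fun p =>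
    p.2.map (g (lev p)) (hgc _)
  have hK : Continuous K := by
    refine Continuous.nonemptyCompacts_map' (g := fun p => g (lev p)) continuous_snd ?_
    exact h2.comp (by fun_prop : Continuous
      fun q : (↥unitInterval × NonemptyCompacts X) × X => (lev q.1, q.2))
  have hKc : ∀ p, (K p : Set X) = g (lev p) '' (p.2 : Set X) := fun p => rfl
  have hsub : ∀ p : ↥unitInterval × NonemptyCompacts X, IsConnected (p.2 : Set X) →
      (K p : Set X) ⊆ p.2 := by
    intro p hp
    rw [hKc]
    rintro _ ⟨x, hx, rfl⟩
    obtain ⟨c, hc, he, -⟩ := key p.2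
    exact flow_mem h1 h2 h4 h5 h6 hp.isPreconnected ((hm0 p.2).trans (le_max_left _ _)) hc
      (he ▸ le_max_left _ _) hx
  have hid : ∀ p : ↥unitInterval × NonemptyCompacts X, (∀ x ∈ (p.2 : Set X), ht x ≤ lev p) →
      K p = p.2 := by
    intro p hp
    apply SetLike.coe_injective
    rw [hKc]
    rw [Set.image_congr (fun x hx => h6 _ x (hp x hx))]
    simp
  refine ⟨⟨fun q => ⟨fun l => K (q.1, q.2.1 l), q.2.2.mono (fun l => hsub _ (q.2.2.1 l))
    fun l => (q.2.2.1 l).image _ (hgc _).continuousOn⟩, ?_⟩, ?_, ?_, ?_⟩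
  · refine Continuous.subtype_mk (continuous_pi fun l => hK.comp ?_) _
    exact continuous_fst.prodMk ((continuous_apply l).comp (continuous_subtype_val.comp
      continuous_snd))
  · intro a
    apply Subtype.ext
    funext l
    refine hid _ fun x hx => (hB x).trans ?_
    simp [lev]
  · intro a l
    obtain ⟨c, hc, he, hmin⟩ := key (a.1 l)
    refine ⟨g (lev (1, a.1 l)) c, ?_⟩
    have hl : lev (1, a.1 l) = ht c := by
      simp [lev, he, h3]
    change (K (1, a.1 l) : Set X) = _
    rw [hKc, hl]
    ext y
    simp only [Set.mem_image, Set.mem_singleton_iff]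
    constructor
    · rintro ⟨x, hx, rfl⟩
      exact flow_const h2 h4 h5 (a.2.1 l).isPreconnected (h3 c) hmin hx hc
    · rintro rfl
      exact ⟨c, hc, rfl⟩
  · intro a ha u
    apply Subtype.ext
    funext l
    refine hid _ fun x hx => le_trans ?_ (le_max_left _ _)
    obtain ⟨c, hc, he, hmin⟩ := key (a.1 l)
    obtain ⟨z, hz⟩ := ha l
    change x ∈ (a.1 l : Set X) at hx
    change _ ≤ m (a.1 l)
    rw [he]
    rw [hz] at hx hc
    rw [Set.mem_singleton_iff.1 hx, Set.mem_singleton_iff.1 hc]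

section treeflow

variable {V : Type} {G : SimpleGraph V}

/-- Existence of the parent function of a rooted tree. -/
theorem exists_parent (hconn : G.Connected) (hacyc : G.IsAcyclic) (r : V) :
    ∃ p : V → V, (∀ a b, G.Adj a b → G.dist r b = G.dist r a + 1 → p b = a) ∧
      ∀ b k, G.dist r b = k + 1 → G.Adj (p b) b ∧ G.dist r (p b) = k := by
  choose q hq hql using fun b => (hconn r b).exists_path_of_dist
  have h1 : ∀ a b, G.Adj a b → G.dist r b = G.dist r a + 1 → (q b).penultimate = a := by
    intro a b hab hd
    have hl : ((q a).concat hab).length = G.dist r b := by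
      rw [SimpleGraph.Walk.length_concat, hql, hd]
    have hpath := SimpleGraph.Walk.isPath_of_length_eq_dist _ hl
    have := (hacyc.subsingleton_path r b).elim ⟨_, hpath⟩ ⟨_, hq b⟩
    rw [← Subtype.mk.inj this]
    simp
  refine ⟨fun b => (q b).penultimate, h1, ?_⟩
  intro b k hb
  have hnil : ¬ (q b).Nil := by
    rw [← SimpleGraph.Walk.length_eq_zero_iff, hql, hb]
    omega
  have hadj := (q b).adj_penultimate hnil
  refine ⟨hadj, ?_⟩
  have h2 : G.dist r (q b).penultimate ≤ k := by
    refine (SimpleGraph.dist_le (q b).dropLast).trans ?_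
    have := hql b
    simp
    omega
  have h3 := hacyc.dist_eq_dist_add_one_of_adj_of_reachable r hadj (hconn _ _)
  change G.dist r (q b).penultimate = k
  omega

/-- Points of the realization, with the parameter clamped to `[0,1]`. -/
def tpt (e : G.Dart) (t : ℝ) : TreeSpace G :=
  Quot.mk _ (e, Set.projIcc (0:ℝ) 1 zero_le_one t)

theorem continuous_tpt (e : G.Dart) : Continuous (tpt e) :=
  continuous_quot_mk.comp (by fun_prop)

theorem mk_eq_tpt (e : G.Dart) (t : Set.Icc (0:ℝ) 1) :
    (Quot.mk _ (e, t) : TreeSpace G) = tpt e t := by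
  simp [tpt]

theorem tpt_zero (e e' : G.Dart) (h : e.fst = e'.fst) {t t' : ℝ} (ht : t ≤ 0) (ht' : t' ≤ 0) :
    tpt e t = tpt e' t' := by
  refine Quot.sound (Or.inr ⟨h, ?_, ?_⟩)
  · simp [Set.projIcc_of_le_left zero_le_one ht]
  · simp [Set.projIcc_of_le_left zero_le_one ht']

theorem tpt_symm (e : G.Dart) (t : ℝ) : tpt e.symm t = tpt e (1 - t) := by
  refine Quot.sound (Or.inl ⟨rfl, ?_⟩)
  simp only [Set.coe_projIcc]
  grind

theorem tpt_one (e e' : G.Dart) (h : e.snd = e'.fst) {t t' : ℝ} (ht : 1 ≤ t) (ht' : t' ≤ 0) :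
    tpt e t = tpt e' t' := by
  rw [← tpt_zero e.symm e' h (by linarith : 1 - t ≤ 0) ht', tpt_symm]
  congr 1
  ring

/-- Height before passing to the quotient. -/
def preHt (h : V → ℕ) (x : G.Dart × ↥(Set.Icc (0:ℝ) 1)) : ℝ :=
  (1 - (x.2 : ℝ)) * h x.1.fst + x.2 * h x.1.snd

/-- The height function on the realization. -/
def treeHt (h : V → ℕ) : TreeSpace G → ℝ :=
  Quot.lift (preHt h) (by
    rintro ⟨e, t⟩ ⟨e', t'⟩ (⟨h1, h2⟩ | ⟨h1, h2, h3⟩)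
    · simp only at h1 h2
      subst h1
      simp only [preHt, h2]
      simp [SimpleGraph.Dart.symm]
      ring
    · simp only at h1 h2 h3
      simp [preHt, h1, h2, h3])

theorem continuous_preHt (h : V → ℕ) : Continuous (preHt (G := G) h) := by
  have : DiscreteTopology G.Dart := ⟨rfl⟩
  have hd : ∀ f : G.Dart → ℝ, Continuous f := fun f => continuous_of_discreteTopology
  have h1 := (hd fun e => (h e.fst : ℝ)).comp
    (continuous_fst : Continuous (Prod.fst : G.Dart × ↥(Set.Icc (0:ℝ) 1) → G.Dart))
  have h2 := (hd fun e => (h e.snd : ℝ)).comp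
    (continuous_fst : Continuous (Prod.fst : G.Dart × ↥(Set.Icc (0:ℝ) 1) → G.Dart))
  have h3 : Continuous fun x : G.Dart × ↥(Set.Icc (0:ℝ) 1) => (x.2 : ℝ) := by fun_prop
  exact ((continuous_const.sub h3).mul h1).add (h3.mul h2)

theorem continuous_treeHt (h : V → ℕ) : Continuous (treeHt (G := G) h) :=
  continuous_quot_lift _ (continuous_preHt h)

theorem treeHt_tpt (h : V → ℕ) (e : G.Dart) {t : ℝ} (h0 : 0 ≤ t) (h1 : t ≤ 1) :
    treeHt h (tpt e t) = (1 - t) * h e.fst + t * h e.snd := by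
  change preHt h (e, _) = _
  simp [preHt, Set.coe_projIcc, h0, h1]

theorem exists_tpt (x : TreeSpace G) : ∃ e t, 0 ≤ t ∧ t ≤ 1 ∧ x = tpt e t := by
  induction x using Quot.ind with
  | mk a => exact ⟨a.1, a.2, a.2.2.1, a.2.2.2, mk_eq_tpt _ _⟩

theorem hasFlow_tree [Fintype V] (hconn : G.Connected) (hacyc : G.IsAcyclic) :
    HasFlow (TreeSpace G) := by
  by_cases hD : IsEmpty G.Dart
  · have : IsEmpty (TreeSpace G) := ⟨fun x => hD.elim (exists_tpt x).choose⟩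
    exact ⟨fun _ => 0, fun _ x => x, continuous_const, continuous_snd, fun _ => le_rfl,
      fun s => Set.toFinite _, fun s x => isEmptyElim x, fun s x => isEmptyElim x⟩
  rw [not_isEmpty_iff] at hD
  obtain ⟨e0⟩ := hD
  -- every vertex starts a dart
  have hdart : ∀ a : V, ∃ e : G.Dart, e.fst = a := by
    intro a
    have : Nontrivial V := ⟨⟨e0.fst, e0.snd, e0.adj.ne⟩⟩
    obtain ⟨b, hb⟩ := hconn.preconnected.exists_adj_of_nontrivial a
    exact ⟨⟨(a, b), hb⟩, rfl⟩
  choose dt hdt using hdart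
  let r := e0.fst
  obtain ⟨p, hp1, hp2⟩ := exists_parent hconn hacyc r
  let h : V → ℕ := fun a => G.dist r a
  have hh : ∀ a b, G.Adj a b → (h b = h a + 1 ∧ p b = a) ∨ (h a = h b + 1 ∧ p a = b) := by
    intro a b hab
    rcases hacyc.dist_eq_dist_add_one_of_adj_of_reachable r hab (hconn _ _) with h1 | h1
    · exact Or.inr ⟨h1, hp1 _ _ hab.symm h1⟩
    · exact Or.inl ⟨h1, hp1 _ _ hab h1⟩
  let vt : V → TreeSpace G := fun a => tpt (dt a) 0
  have hvt0 : ∀ (e : G.Dart) (t : ℝ), t ≤ 0 → tpt e t = vt e.fst := fun e t ht =>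
    tpt_zero _ _ (hdt _).symm ht le_rfl
  have hvt1 : ∀ (e : G.Dart) (t : ℝ), 1 ≤ t → tpt e t = vt e.snd := fun e t ht =>
    tpt_one _ _ (hdt _).symm ht le_rfl
  have hvth : ∀ a, treeHt h (vt a) = h a := by
    intro a
    rw [treeHt_tpt h _ le_rfl zero_le_one, hdt]
    simp
  -- edge below a vertex
  let E : V → ℝ → TreeSpace G := fun b t =>
    if hb : G.Adj (p b) b then tpt ⟨(p b, b), hb⟩ t else vt b
  have hEc : ∀ b, Continuous (E b) := by
    intro b
    by_cases hb : G.Adj (p b) b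
    · simpa [E, hb] using continuous_tpt _
    · simpa [E, hb] using continuous_const
  have hE : ∀ (e : G.Dart) t, p e.snd = e.fst → E e.snd t = tpt e t := by
    intro e t he
    obtain ⟨⟨a, b⟩, hab⟩ := e
    simp only at he
    subst he
    have : G.Adj (p b) b := hab
    simp [E, this]
  -- paths from a vertex to the root
  let γ : ℕ → V → ℝ → TreeSpace G := fun k => Nat.rec (fun a _ => vt a)
    (fun k f a s => if s ≤ (k : ℝ) then f (p a) s else E a (s - k)) k
  have γ0 : ∀ a s, γ 0 a s = vt a := fun a s => rfl
  have γs : ∀ k a s, γ (k + 1) a s = if s ≤ (k : ℝ) then γ k (p a) s else E a (s - k) :=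
    fun k a s => rfl
  have hEdge : ∀ b k, h b = k + 1 → h (p b) = k ∧ ∃ e : G.Dart, e.fst = p b ∧ e.snd = b ∧
      ∀ t, E b t = tpt e t := by
    intro b k hb
    obtain ⟨h1, h2⟩ := hp2 b k hb
    exact ⟨h2, ⟨(p b, b), h1⟩, rfl, rfl, fun t => hE ⟨(p b, b), h1⟩ t rfl⟩
  have γtop : ∀ k a s, h a = k → (k : ℝ) ≤ s → γ k a s = vt a := by
    intro k a s ha hs
    cases k with
    | zero => rfl
    | succ k =>
      push_cast at hs
      obtain ⟨h1, e, he1, he2, he⟩ := hEdge a k ha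
      rw [γs, if_neg (by linarith), he, hvt1 _ _ (by linarith), he2]
  have γc : ∀ k a, h a = k → Continuous (γ k a) := by
    intro k
    induction k with
    | zero => exact fun a _ => continuous_const
    | succ k ih =>
      intro a ha
      obtain ⟨h1, e, he1, he2, he⟩ := hEdge a k ha
      have : γ (k + 1) a = fun s => if s ≤ (k : ℝ) then γ k (p a) s else E a (s - k) := rfl
      rw [this]
      refine Continuous.if_le (ih _ h1) ((hEc a).comp (by fun_prop)) continuous_id
        continuous_const ?_
      intro s hs
      rw [γtop k _ s h1 hs.ge, he, hvt0 _ _ (by linarith), he1]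
  have γh : ∀ k a s, h a = k → 0 ≤ s → treeHt h (γ k a s) = min s k := by
    intro k
    induction k with
    | zero =>
      intro a s ha hs
      rw [γ0, hvth, ha]
      simp [hs]
    | succ k ih =>
      intro a s ha hs
      obtain ⟨h1, e, he1, he2, he⟩ := hEdge a k ha
      rw [γs]
      split_ifs with hsk
      · rw [ih _ _ h1 hs, min_eq_left hsk, min_eq_left]
        push_cast
        linarith
      · push Not at hsk
        rcases le_total s (k + 1) with h2 | h2
        · rw [he, treeHt_tpt h e (by linarith) (by linarith), he1, he2, h1, ha]
          push_cast
          rw [min_eq_left h2]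
          ring
        · rw [he, hvt1 e _ (by linarith), hvth, he2, ha, min_eq_right]
          push_cast
          exact h2
  -- the flow on an edge
  let Q : V → ℝ → ℝ → TreeSpace G := fun b t s =>
    if s ≤ (h (p b) : ℝ) then γ (h (p b)) (p b) s else E b (min t (s - h (p b)))
  have hQc : ∀ e : G.Dart, p e.snd = e.fst →
      Continuous fun q : (Set.Icc (0:ℝ) 1) × ℝ => Q e.snd q.1 q.2 := by
    intro e he
    refine Continuous.if_le ((γc _ _ rfl).comp continuous_snd) ((hEc _).comp (by fun_prop))
      continuous_snd continuous_const ?_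
    intro q hq
    rw [γtop _ _ _ rfl hq.ge, hE e _ he, hvt0 _ _ (by rw [hq]; simp), he]
  have hQ0 : ∀ e : G.Dart, p e.snd = e.fst → ∀ s, Q e.snd 0 s = γ (h e.fst) e.fst s := by
    intro e he s
    simp only [Q, he]
    split_ifs with hs
    · rfl
    · push Not at hs
      rw [hE e _ he, hvt0 _ _ (min_le_left _ _), γtop _ _ _ rfl hs.le]
  have hQ1 : ∀ e : G.Dart, p e.snd = e.fst → h e.snd = h e.fst + 1 →
      ∀ s, Q e.snd 1 s = γ (h e.snd) e.snd s := by
    intro e he hhe s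
    simp only [Q, he]
    rw [hhe, γs, he]
    split_ifs with hs
    · rfl
    · rcases le_total 1 (s - h e.fst) with h1 | h1
      · rw [min_eq_left h1, hE e _ he, hE e _ he, hvt1 _ _ le_rfl, hvt1 _ _ h1]
      · rw [min_eq_right h1]
  have hQtop : ∀ e : G.Dart, p e.snd = e.fst → ∀ t s, 0 ≤ t → (h e.fst : ℝ) + t ≤ s →
      Q e.snd t s = tpt e t := by
    intro e he t s ht hs
    simp only [Q, he]
    split_ifs with h1
    · rw [γtop _ _ _ rfl (by linarith), hvt0 _ _ (by linarith)]
    · rw [min_eq_left (by linarith), hE e _ he]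
  have hQh : ∀ e : G.Dart, p e.snd = e.fst → h e.snd = h e.fst + 1 → ∀ t s, 0 ≤ t → t ≤ 1 →
      0 ≤ s → treeHt h (Q e.snd t s) = min s (h e.fst + t) := by
    intro e he hhe t s ht0 ht1 hs
    rcases le_total ((h e.fst : ℝ) + t) s with h1 | h1
    · rw [hQtop e he t s ht0 h1, treeHt_tpt h e ht0 ht1, hhe, min_eq_right h1]
      push_cast
      ring
    · simp only [Q, he]
      split_ifs with h2
      · rw [γh _ _ _ rfl hs, min_eq_left h2, min_eq_left h1]
      · push Not at h2
        rw [min_eq_right (by linarith), hE e _ he, treeHt_tpt h e (by linarith) (by linarith),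
          hhe, min_eq_left h1]
        push_cast
        ring
  have hup : ∀ e : G.Dart, (p e.snd = e.fst ∧ h e.snd = h e.fst + 1) ∨
      (p e.fst = e.snd ∧ h e.fst = h e.snd + 1) := by
    intro e
    rcases hh e.fst e.snd e.adj with h1 | h1
    · exact Or.inl ⟨h1.2, h1.1⟩
    · exact Or.inr ⟨h1.2, h1.1⟩
  let L : G.Dart × ↥(Set.Icc (0:ℝ) 1) → ℝ → TreeSpace G := fun x s =>
    if h x.1.snd = h x.1.fst + 1 then Q x.1.snd x.2 s else Q x.1.fst (1 - x.2) s
  have : DiscreteTopology G.Dart := ⟨rfl⟩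
  have hLc : Continuous (Function.uncurry L) := by
    have : Continuous fun q : G.Dart × (↥(Set.Icc (0:ℝ) 1) × ℝ) => L (q.1, q.2.1) q.2.2 := by
      rw [continuous_prod_of_discrete_left]
      intro e
      rcases hup e with ⟨h1, h2⟩ | ⟨h1, h2⟩
      · simp only [L, h2, if_true]
        exact hQc e h1
      · simp only [L, if_neg (by omega : ¬ h e.snd = h e.fst + 1)]
        have := (hQc e.symm h1).comp (f := fun q : ↥(Set.Icc (0:ℝ) 1) × ℝ =>
          ((unitInterval.symm q.1 : ↥(Set.Icc (0:ℝ) 1)), q.2)) (by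
            exact (unitInterval.continuous_symm.comp continuous_fst).prodMk continuous_snd)
        exact this
    exact this.comp (Homeomorph.prodAssoc _ _ _).continuous
  have hLrel : ∀ x y, treeRel G x y → L x = L y := by
    rintro ⟨e, t⟩ ⟨e', t'⟩ (⟨h1, h2⟩ | ⟨h1, h2, h3⟩)
    · simp only at h1 h2
      subst h1
      funext s
      have hs1 : e'.symm.fst = e'.snd := rfl
      have hs2 : e'.symm.snd = e'.fst := rfl
      rcases hup e' with ⟨-, h3⟩ | ⟨-, h3⟩
      · simp only [L, hs1, hs2, h2]
        rw [if_neg (by omega), if_pos h3]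
        simp
      · simp only [L, hs1, hs2, h2]
        rw [if_pos h3, if_neg (by omega)]
    · simp only at h1 h2 h3
      have aux : ∀ (f : G.Dart) (u : ↥(Set.Icc (0:ℝ) 1)), (u : ℝ) = 0 → ∀ s,
          L (f, u) s = γ (h f.fst) f.fst s := by
        intro f u hu s
        rcases hup f with ⟨h5, h6⟩ | ⟨h5, h6⟩
        · simp only [L, h6, if_true, hu]
          exact hQ0 f h5 s
        · simp only [L, if_neg (by omega : ¬ h f.snd = h f.fst + 1), hu, sub_zero]
          exact hQ1 f.symm h5 h6 s
      funext s
      rw [aux e t h2, aux e' t' h3]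
      have h1' : e.fst = e'.fst := h1
      rw [h1']
  let Lc : C(G.Dart × ↥(Set.Icc (0:ℝ) 1), C(ℝ, TreeSpace G)) :=
    ContinuousMap.curry ⟨Function.uncurry L, hLc⟩
  have hLcrel : ∀ x y, treeRel G x y → Lc x = Lc y := by
    intro x y hxy
    ext1 s
    exact congrFun (hLrel x y hxy) s
  let gq : TreeSpace G → C(ℝ, TreeSpace G) := Quot.lift Lc hLcrel
  have hgq : Continuous gq := continuous_quot_lift hLcrel Lc.continuous
  have hgpt : ∀ (e : G.Dart) (t s : ℝ), 0 ≤ t → t ≤ 1 → p e.snd = e.fst →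
      h e.snd = h e.fst + 1 → gq (tpt e t) s = Q e.snd t s := by
    intro e t s ht0 ht1 h1 h2
    change L (e, _) s = _
    simp [L, h2, Set.coe_projIcc, ht0, ht1]
  -- normal form of a point
  have hnf : ∀ x : TreeSpace G, ∃ e t, 0 ≤ t ∧ t ≤ 1 ∧ p e.snd = e.fst ∧
      h e.snd = h e.fst + 1 ∧ x = tpt e t := by
    intro x
    obtain ⟨e, t, h0, h1, rfl⟩ := exists_tpt x
    rcases hup e with ⟨h5, h6⟩ | ⟨h5, h6⟩
    · exact ⟨e, t, h0, h1, h5, h6, rfl⟩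
    · refine ⟨e.symm, 1 - t, by linarith, by linarith, h5, h6, ?_⟩
      rw [tpt_symm]
      congr 1
      ring
  have hnfh : ∀ (e : G.Dart) (t : ℝ), 0 ≤ t → t ≤ 1 → h e.snd = h e.fst + 1 →
      treeHt h (tpt e t) = h e.fst + t := by
    intro e t h0 h1 h2
    rw [treeHt_tpt h e h0 h1, h2]
    push_cast
    ring
  refine ⟨treeHt h, fun s x => gq x s, continuous_treeHt h, ?_, ?_, ?_, ?_, ?_⟩
  · have : Continuous fun q : ℝ × TreeSpace G => gq q.2 q.1 :=
      (hgq.comp continuous_snd).eval continuous_fst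
    exact this
  · intro x
    obtain ⟨e, t, h0, h1, h5, h6, rfl⟩ := hnf x
    rw [hnfh e t h0 h1 h6]
    positivity
  · intro s
    refine (Set.finite_range fun e : G.Dart => tpt e (s - h e.fst)).subset ?_
    intro x hx
    obtain ⟨e, t, h0, h1, h5, h6, rfl⟩ := hnf x
    change treeHt h (tpt e t) = s at hx
    rw [hnfh e t h0 h1 h6] at hx
    refine ⟨e, ?_⟩
    simp only
    congr 1
    linarith
  · intro s x hs
    obtain ⟨e, t, h0, h1, h5, h6, rfl⟩ := hnf x
    simp only
    rw [hgpt e t s h0 h1 h5 h6, hQh e h5 h6 t s h0 h1 hs, hnfh e t h0 h1 h6]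
  · intro s x hs
    obtain ⟨e, t, h0, h1, h5, h6, rfl⟩ := hnf x
    rw [hnfh e t h0 h1 h6] at hs
    simp only
    rw [hgpt e t s h0 h1 h5 h6, hQtop e h5 t s h0 hs]

end treeflow

open TopologicalSpace in
/-- For a geometric tree `X` (a compact metric space homeomorphic to the realization of a
finite connected acyclic graph) and a generic cellular merge tree `T`, the space
`Conf_Min(X,T)` of constrained configurations of disjoint connected closed sets (with the
Hausdorff metric topology) strongly deformation retracts onto the subspace `Conf(X,T)` of
point (singleton) configurations; in particular the two spaces are homotopy equivalent. -/
theorem stmt16 {V : Type} [Fintype V] (G : SimpleGraph V)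
    (hconn : G.Connected) (hacyc : G.IsAcyclic)
    {X : Type} [MetricSpace X] [CompactSpace X] (hX : Nonempty (X ≃ₜ TreeSpace G))
    (d : MergeTreeData) (hgen : d.Generic) :
    ∃ H : C(↥unitInterval × {F : d.Leaf → NonemptyCompacts X // MinCond d F},
            {F : d.Leaf → NonemptyCompacts X // MinCond d F}),
      (∀ a, H (0, a) = a) ∧
      (∀ a l, ∃ x : X, ((H (1, a)).1 l : Set X) = {x}) ∧
      (∀ a, (∀ l, ∃ x : X, ((a.1 l : Set X)) = {x}) → ∀ u, H (u, a) = a) := by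
  exact main_of_flow ((hasFlow_tree hconn hacyc).congr hX.some) d
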